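/- arXiv:1808.03764 — 2 statements merged into one kernel-verified Lean document; each statement's English description precedes it below -/
import Mathlib

section
/- The direct product ⊗ is a stable and associative operation on 132-avoiding permutations: for all 132-avoiding permutations α, β, γ, the permutation α⊗β is 132-avoiding, and (α⊗β)⊗γ = α⊗(β⊗γ). -/
open Equiv Finset

/-- Number of crossings of a permutation of `Fin n` (0-indexed version of the
classical definition on `[n] = {1,…,n}`): pairs `(i,j)` with
`i<j<σ(i)<σ(j)` or `σ(i)<σ(j)≤i<j`. -/
def crs {n : ℕ} (σ : Equiv.Perm (Fin n)) : ℕ :=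
  (Finset.univ.filter (fun q : Fin n × Fin n =>
    ((q.1 : ℕ) < q.2 ∧ (q.2 : ℕ) < σ q.1 ∧ (σ q.1 : ℕ) < σ q.2) ∨
    ((σ q.1 : ℕ) < σ q.2 ∧ (σ q.2 : ℕ) ≤ q.1 ∧ (q.1 : ℕ) < q.2))).card

/-- Number of nestings of a permutation of `Fin n`: pairs `(i,j)` with
`i<j<σ(j)<σ(i)` or `σ(j)<σ(i)≤i<j`. -/
def nes {n : ℕ} (σ : Equiv.Perm (Fin n)) : ℕ :=
  (Finset.univ.filter (fun q : Fin n × Fin n =>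
    ((q.1 : ℕ) < q.2 ∧ (q.2 : ℕ) < σ q.2 ∧ (σ q.2 : ℕ) < σ q.1) ∨
    ((σ q.2 : ℕ) < σ q.1 ∧ (σ q.1 : ℕ) ≤ q.1 ∧ (q.1 : ℕ) < q.2))).card

/-- Number of fixed points. -/
def fp {n : ℕ} (σ : Equiv.Perm (Fin n)) : ℕ :=
  (Finset.univ.filter (fun i : Fin n => σ i = i)).card

/-- Number of excedances. -/
def exc {n : ℕ} (σ : Equiv.Perm (Fin n)) : ℕ :=
  (Finset.univ.filter (fun i : Fin n => (i : ℕ) < σ i)).card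

/-- Number of inversions. -/
def invStat {n : ℕ} (σ : Equiv.Perm (Fin n)) : ℕ :=
  (Finset.univ.filter (fun q : Fin n × Fin n => q.1 < q.2 ∧ σ q.2 < σ q.1)).card

/-- `σ` contains the pattern `τ`: there is a strictly increasing choice of positions
on which `σ` is order-isomorphic to `τ`. -/
def Contains {n k : ℕ} (σ : Equiv.Perm (Fin n)) (τ : Equiv.Perm (Fin k)) : Prop :=
  ∃ f : Fin k → Fin n, StrictMono f ∧ ∀ a b : Fin k, σ (f a) < σ (f b) ↔ τ a < τ b

/-- `σ` avoids the pattern `τ`. -/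
def Avoids {n k : ℕ} (σ : Equiv.Perm (Fin n)) (τ : Equiv.Perm (Fin k)) : Prop :=
  ¬ Contains σ τ

/-- The pattern 123 (as a permutation of `Fin 3`, 0-indexed). -/
def p123 : Equiv.Perm (Fin 3) := 1
/-- The pattern 132. -/
def p132 : Equiv.Perm (Fin 3) := Equiv.swap 1 2
/-- The pattern 213. -/
def p213 : Equiv.Perm (Fin 3) := Equiv.swap 0 1
/-- The pattern 321. -/
def p321 : Equiv.Perm (Fin 3) := Equiv.swap 0 2
/-- The pattern 231. -/
def p231 : Equiv.Perm (Fin 3) := Equiv.swap 0 2 * Equiv.swap 0 1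
/-- The pattern 312. -/
def p312 : Equiv.Perm (Fin 3) := Equiv.swap 0 2 * Equiv.swap 1 2

/-- `T(σ) = {i : i < σ(i) and i < σ⁻¹(i)}`. -/
def Tset {n : ℕ} (σ : Equiv.Perm (Fin n)) : Finset (Fin n) :=
  Finset.univ.filter (fun i : Fin n => (i : ℕ) < σ i ∧ (i : ℕ) < σ⁻¹ i)

lemma Tset_card_le {n : ℕ} (σ : Equiv.Perm (Fin n)) : (Tset σ).card ≤ n :=
  (Finset.card_le_univ _).trans (by simp)

/-- The equivalence `Fin m ⊕ Fin n ≃ Fin (m+n)` sending the `Fin m` block to the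
positions `k, k+1, …, k+m-1` (in order) and the `Fin n` part to the remaining
positions (in order): `inr i ↦ i` if `i < k` and `inr i ↦ m + i` otherwise. -/
noncomputable def blockEquiv (m n k : ℕ) (hk : k ≤ n) : Fin m ⊕ Fin n ≃ Fin (m + n) :=
  Equiv.ofBijective
    (Sum.elim
      (fun j : Fin m => (⟨k + (j : ℕ), by have := j.isLt; omega⟩ : Fin (m + n)))
      (fun i : Fin n => if (i : ℕ) < k then (⟨(i : ℕ), by have := i.isLt; omega⟩ : Fin (m + n))
          else ⟨m + (i : ℕ), by have := i.isLt; omega⟩))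
    (by
      rw [Fintype.bijective_iff_injective_and_card]
      refine ⟨?_, by simp⟩
      rintro (j | i) (j' | i') h
      · simp only [Sum.elim_inl, Fin.mk.injEq] at h
        exact congrArg Sum.inl (Fin.ext (by omega))
      · exfalso
        have hj := j.isLt; have hi := i'.isLt
        simp only [Sum.elim_inl, Sum.elim_inr] at h
        split_ifs at h <;> simp only [Fin.mk.injEq] at h <;> omega
      · exfalso
        have hi := i.isLt; have hj := j'.isLt
        simp only [Sum.elim_inl, Sum.elim_inr] at h
        split_ifs at h <;> simp only [Fin.mk.injEq] at h <;> omega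
      · have hi := i.isLt; have hi' := i'.isLt
        simp only [Sum.elim_inr] at h
        split_ifs at h <;> simp only [Fin.mk.injEq] at h <;>
          exact congrArg Sum.inr (Fin.ext (by omega)))

/-- The direct product `α ⊗ β` of permutations `α` of length `m` and `β` of length `n`:
with `k = |T(β)|` (the 0-indexed form of `k = 1 + |T(β)|`), the block of positions
`k, …, k+m-1` carries the values of `α` shifted by `k`, and the remaining positions
carry the values of `β` in order, with values `≥ k` shifted up by `m`. -/
noncomputable def dprod {m n : ℕ} (α : Equiv.Perm (Fin m)) (β : Equiv.Perm (Fin n)) :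
    Equiv.Perm (Fin (m + n)) :=
  (blockEquiv m n (Tset β).card (Tset_card_le β)).permCongr (Equiv.sumCongr α β)

/-!
Both assertions come from inserting `α` as a block at an arbitrary height `k` in `β`: this keeps
the cycles of `α` and `β` apart and preserves the order within each of the two parts. The product
`α ⊗ β` is the insertion at `k = |T(β)|`.

*Associativity.* Membership in `T` only compares an entry with its two neighbours in its own cycle,
so `T` of an insertion has `|T(α)| + |T(β)|` elements whatever `k` is. Hence the two bracketings
insert at matching heights: putting `α` in `β` at `k` and the result in `γ` at `l` is the same as
putting `β` in `γ` at `l` and then `α` in the result at `k + l`.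

*Stability.* If `β` avoids 132, then `T(β)` is the initial segment `{0, …, k - 1}`. Cut the diagram
of `β` at position `k` and height `k`: by the definition of `T`, the lower left quadrant is empty,
and since `k ∉ T(β)`, some entry lies weakly below and to the left of `(k, k)`, which forces the
upper right quadrant to be increasing. An occurrence of 132 in `α ⊗ β` that mixes block and
non-block entries would violate one of these two facts.
-/

theorem Contains.trans {n k l : ℕ} {σ : Perm (Fin n)} {τ : Perm (Fin k)} {π : Perm (Fin l)}
    (hστ : Contains σ τ) (hτπ : Contains τ π) : Contains σ π := by
  obtain ⟨f, hf, hfσ⟩ := hστ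
  obtain ⟨g, hg, hgτ⟩ := hτπ
  exact ⟨f ∘ g, hf.comp hg, fun a b => (hfσ _ _).trans (hgτ a b)⟩

theorem Avoids.of_contains {n k l : ℕ} {σ : Perm (Fin n)} {τ : Perm (Fin k)} {π : Perm (Fin l)}
    (hσ : Avoids σ π) (hστ : Contains σ τ) : Avoids τ π :=
  mt hστ.trans hσ

theorem contains_p132_iff {n : ℕ} {σ : Perm (Fin n)} :
    Contains σ p132 ↔ ∃ a b c, a < b ∧ b < c ∧ σ a < σ c ∧ σ c < σ b := by
  constructor
  · rintro ⟨f, hf, hσ⟩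
    exact ⟨f 0, f 1, f 2, hf (by decide), hf (by decide), (hσ 0 2).2 (by decide),
      (hσ 2 1).2 (by decide)⟩
  · rintro ⟨a, b, c, hab, hbc, hac, hcb⟩
    refine ⟨![a, b, c], ?_, ?_⟩
    · simp [Fin.strictMono_iff_lt_succ, Fin.forall_fin_two, hab, hbc]
    · have hab' := hac.trans hcb
      simp [Fin.forall_fin_succ, p132, hac, hcb, hab', hac.le, hcb.le, hab'.le, swap_apply_def]

theorem avoids_p132_iff {n : ℕ} {σ : Perm (Fin n)} :
    Avoids σ p132 ↔ ∀ a b c, a < b → b < c → σ a < σ c → σ b < σ c := by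
  rw [Avoids, contains_p132_iff]
  push Not
  refine forall₃_congr fun a b c => forall₃_congr fun _ hbc _ => ?_
  exact ⟨fun h => h.lt_of_ne (σ.injective.ne hbc.ne), le_of_lt⟩

theorem mem_iff_lt_card_of_isLowerSet {n : ℕ} {s : Finset (Fin n)}
    (hs : IsLowerSet (s : Set (Fin n))) {i : Fin n} : i ∈ s ↔ (i : ℕ) < #s := by
  constructor
  · intro hi
    have hsub : Iic i ⊆ s := fun j hj => hs (mem_Iic.1 hj) hi
    simpa [Nat.succ_le_iff] using card_le_card hsub
  · contrapose!
    intro hi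
    have hsub : s ⊆ Iio i := fun j hj => mem_Iio.2 (lt_of_not_ge fun hij => hi (hs hij hj))
    simpa using card_le_card hsub

section Tset

variable {n : ℕ} {σ : Perm (Fin n)}

theorem mem_Tset {i : Fin n} : i ∈ Tset σ ↔ i < σ i ∧ i < σ⁻¹ i := by
  simp [Tset]

theorem apply_notMem_Tset_of_mem_Tset {i : Fin n} (hi : i ∈ Tset σ) : σ i ∉ Tset σ := by
  intro hσi
  have h : σ i < i := by simpa using (mem_Tset.1 hσi).2
  exact lt_asymm h (mem_Tset.1 hi).1

theorem exists_le_apply_le_of_notMem_Tset {i : Fin n} (hi : i ∉ Tset σ) :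
    ∃ s ≤ i, σ s ≤ i := by
  rw [mem_Tset, not_and_or, not_lt, not_lt] at hi
  rcases hi with hσi | hσi
  · exact ⟨i, le_rfl, hσi⟩
  · exact ⟨σ⁻¹ i, hσi, by simp⟩

theorem isLowerSet_Tset (hσ : Avoids σ p132) : IsLowerSet (Tset σ : Set (Fin n)) := by
  intro i j hji hi
  by_contra hj
  obtain ⟨s, hsj, hσsj⟩ := exists_le_apply_le_of_notMem_Tset hj
  have hji : j < i := hji.lt_of_ne (ne_of_mem_of_not_mem hi hj).symm
  obtain ⟨hσi, hσi'⟩ := mem_Tset.1 hi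
  -- `s < i < σ⁻¹ i` would be the positions of an occurrence of 132.
  have h : σ i < i := by
    simpa [hσsj.trans_lt hji] using
      avoids_p132_iff.1 hσ s i (σ⁻¹ i) (hsj.trans_lt hji) hσi'
  exact lt_asymm hσi h

theorem mem_Tset_iff_lt_card (hσ : Avoids σ p132) {i : Fin n} :
    i ∈ Tset σ ↔ (i : ℕ) < #(Tset σ) :=
  mem_iff_lt_card_of_isLowerSet (isLowerSet_Tset hσ)

theorem card_Tset_le_apply (hσ : Avoids σ p132) (i : Fin n) (hi : (i : ℕ) < #(Tset σ)) :
    #(Tset σ) ≤ σ i := by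
  have hi : i ∈ Tset σ := (mem_Tset_iff_lt_card hσ).2 hi
  exact not_lt.1 (mt (mem_Tset_iff_lt_card hσ).2 (apply_notMem_Tset_of_mem_Tset hi))

theorem strictMonoOn_of_card_Tset_le (hσ : Avoids σ p132) :
    StrictMonoOn σ {i | #(Tset σ) ≤ i ∧ #(Tset σ) ≤ σ i} := by
  rintro p ⟨hp, -⟩ q ⟨-, hσq⟩ hpq
  let t : Fin n := ⟨#(Tset σ), hp.trans_lt p.isLt⟩
  have ht : t ∉ Tset σ := mt (mem_Tset_iff_lt_card hσ).1 (lt_irrefl _)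
  obtain ⟨s, hst, hσst⟩ := exists_le_apply_le_of_notMem_Tset ht
  have hsp : s ≤ p := hst.trans hp
  have hσsq : σ s < σ q :=
    (hσst.trans hσq).lt_of_ne (σ.injective.ne (hsp.trans_lt hpq).ne)
  rcases hsp.eq_or_lt with rfl | hsp
  · exact hσsq
  · exact avoids_p132_iff.1 hσ s p q hsp hpq hσsq

end Tset

section blockEquiv

variable {m n k : ℕ} (hk : k ≤ n)

theorem val_blockEquiv_inl (j : Fin m) : (blockEquiv m n k hk (.inl j) : ℕ) = k + j := by
  simp [blockEquiv]

theorem val_blockEquiv_inr (i : Fin n) :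
    (blockEquiv m n k hk (.inr i) : ℕ) = if (i : ℕ) < k then (i : ℕ) else m + i := by
  simp [blockEquiv, apply_ite Fin.val]

theorem blockEquiv_inl_lt_inl {i j : Fin m} :
    blockEquiv m n k hk (.inl i) < blockEquiv m n k hk (.inl j) ↔ i < j := by
  simp only [Fin.lt_def, val_blockEquiv_inl, Nat.add_lt_add_iff_left]

theorem blockEquiv_inr_lt_inr {i j : Fin n} :
    blockEquiv m n k hk (.inr i) < blockEquiv m n k hk (.inr j) ↔ i < j := by
  simp only [Fin.lt_def, val_blockEquiv_inr]
  split_ifs <;> omega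

theorem blockEquiv_inl_lt_inr {i : Fin m} {j : Fin n} :
    blockEquiv m n k hk (.inl i) < blockEquiv m n k hk (.inr j) ↔ k ≤ j := by
  simp only [Fin.lt_def, val_blockEquiv_inl, val_blockEquiv_inr]
  split_ifs <;> omega

theorem blockEquiv_inr_lt_inl {i : Fin n} {j : Fin m} :
    blockEquiv m n k hk (.inr i) < blockEquiv m n k hk (.inl j) ↔ (i : ℕ) < k := by
  simp only [Fin.lt_def, val_blockEquiv_inl, val_blockEquiv_inr]
  split_ifs <;> omega

theorem blockEquiv_assoc {r l : ℕ} (hl : l ≤ r) :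
    ((sumCongr (blockEquiv m n k hk) (Equiv.refl (Fin r))).trans
        (blockEquiv (m + n) r l hl)).trans (finCongr (add_assoc m n r)) =
      ((sumAssoc _ _ _).trans (sumCongr (Equiv.refl (Fin m)) (blockEquiv n r l hl))).trans
        (blockEquiv m (n + r) (k + l) (Nat.add_le_add hk hl)) := by
  ext ((a | b) | c) <;>
    simp only [trans_apply, sumCongr_apply, Sum.map_inl, Sum.map_inr, refl_apply,
      sumAssoc_apply_inl_inl, sumAssoc_apply_inl_inr, sumAssoc_apply_inr, finCongr_apply,
      Fin.val_cast, val_blockEquiv_inl, val_blockEquiv_inr]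
  · omega
  · split_ifs <;> omega
  · split_ifs <;> omega

end blockEquiv

/-- The insertion of `α` into `β` as a block on the positions and values `k, …, k + m - 1`, the
entries of `β` at positions or values `≥ k` being shifted up by `m`. The direct product `α ⊗ β` is
the case `k = |T(β)|`. -/
noncomputable def blockInsert {m n : ℕ} (k : ℕ) (hk : k ≤ n) (α : Perm (Fin m))
    (β : Perm (Fin n)) : Perm (Fin (m + n)) :=
  (blockEquiv m n k hk).permCongr (sumCongr α β)

section blockInsert

variable {m n k : ℕ} (hk : k ≤ n) (α : Perm (Fin m)) (β : Perm (Fin n))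

theorem blockInsert_inl (j : Fin m) :
    blockInsert k hk α β (blockEquiv m n k hk (.inl j)) = blockEquiv m n k hk (.inl (α j)) := by
  simp [blockInsert]

theorem blockInsert_inr (i : Fin n) :
    blockInsert k hk α β (blockEquiv m n k hk (.inr i)) = blockEquiv m n k hk (.inr (β i)) := by
  simp [blockInsert]

theorem blockInsert_inv : (blockInsert k hk α β)⁻¹ = blockInsert k hk α⁻¹ β⁻¹ :=
  rfl

theorem Tset_blockInsert :
    Tset (blockInsert k hk α β) =
      ((Tset α).disjSum (Tset β)).map (blockEquiv m n k hk).toEmbedding := by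
  ext x
  obtain ⟨j | i, rfl⟩ := (blockEquiv m n k hk).surjective x
  · simp [mem_Tset, blockInsert_inv, blockInsert_inl, blockEquiv_inl_lt_inl]
  · simp [mem_Tset, blockInsert_inv, blockInsert_inr, blockEquiv_inr_lt_inr]

theorem card_Tset_blockInsert : #(Tset (blockInsert k hk α β)) = #(Tset α) + #(Tset β) := by
  rw [Tset_blockInsert, card_map, card_disjSum]

theorem blockInsert_assoc {r l : ℕ} (hl : l ≤ r) (γ : Perm (Fin r)) :
    (finCongr (add_assoc m n r)).permCongr (blockInsert l hl (blockInsert k hk α β) γ) =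
      blockInsert (k + l) (Nat.add_le_add hk hl) α (blockInsert l hl β γ) := by
  let e := ((sumCongr (blockEquiv m n k hk) (Equiv.refl (Fin r))).trans
    (blockEquiv (m + n) r l hl)).trans (finCongr (add_assoc m n r))
  let e' := ((sumAssoc _ _ _).trans (sumCongr (Equiv.refl (Fin m)) (blockEquiv n r l hl))).trans
    (blockEquiv m (n + r) (k + l) (Nat.add_le_add hk hl))
  have he : e = e' := blockEquiv_assoc hk hl
  calc
    _ = e.permCongr (sumCongr (sumCongr α β) γ) := by
      ext x
      obtain ⟨(a | b) | c, rfl⟩ := e.surjective x <;>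
        simp [e, blockInsert]
    _ = e'.permCongr (sumCongr (sumCongr α β) γ) := by rw [he]
    _ = _ := by
      ext x
      obtain ⟨(a | b) | c, rfl⟩ := e'.surjective x <;>
        simp [e', blockInsert]

theorem contains_blockInsert_left : Contains (blockInsert k hk α β) α :=
  ⟨fun j => blockEquiv m n k hk (.inl j), fun _ _ => (blockEquiv_inl_lt_inl hk).2,
    fun a b => by simp only [blockInsert_inl, blockEquiv_inl_lt_inl]⟩

theorem contains_blockInsert_right : Contains (blockInsert k hk α β) β :=
  ⟨fun i => blockEquiv m n k hk (.inr i), fun _ _ => (blockEquiv_inr_lt_inr hk).2,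
    fun a b => by simp only [blockInsert_inr, blockEquiv_inr_lt_inr]⟩

variable {α β}

theorem avoids_p132_blockInsert (hα : Avoids α p132) (hβ : Avoids β p132)
    (hlow : ∀ i : Fin n, (i : ℕ) < k → k ≤ β i)
    (hmono : StrictMonoOn β {i | k ≤ i ∧ k ≤ β i}) :
    Avoids (blockInsert k hk α β) p132 := by
  rw [avoids_p132_iff] at hα hβ ⊢
  simp only [(blockEquiv m n k hk).surjective.forall]
  rintro (a | a) (b | b) (c | c) <;>
    simp only [blockInsert_inl, blockInsert_inr, blockEquiv_inl_lt_inl, blockEquiv_inr_lt_inr,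
      blockEquiv_inl_lt_inr, blockEquiv_inr_lt_inl] <;>
    intro hab hbc hac
  · exact hα a b c hab hbc hac
  · exact hac
  · exact absurd hbc hab.not_gt
  · rcases lt_or_ge (β b : ℕ) k with hb | hb
    · exact hb.trans_le hac
    · exact hmono ⟨hab, hb⟩ ⟨hab.trans hbc.le, hac⟩ hbc
  · exact absurd hac (hlow a hab).not_gt
  · exact (hlow a hab).trans hac.le
  · exact absurd hac (hlow a (lt_trans (Fin.lt_def.1 hab) hbc)).not_gt
  · exact hβ a b c hab hbc hac

end blockInsert

section dprod

variable {m n r : ℕ} (α : Perm (Fin m)) (β : Perm (Fin n)) (γ : Perm (Fin r))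

theorem dprod_eq_blockInsert : dprod α β = blockInsert #(Tset β) (Tset_card_le β) α β :=
  rfl

theorem avoids_p132_dprod_iff :
    Avoids (dprod α β) p132 ↔ Avoids α p132 ∧ Avoids β p132 := by
  rw [dprod_eq_blockInsert]
  refine ⟨fun h => ⟨h.of_contains (contains_blockInsert_left _ α β),
    h.of_contains (contains_blockInsert_right _ α β)⟩, fun ⟨hα, hβ⟩ => ?_⟩
  exact avoids_p132_blockInsert _ hα hβ (card_Tset_le_apply hβ) (strictMonoOn_of_card_Tset_le hβ)

theorem dprod_assoc :
    (finCongr (add_assoc m n r)).permCongr (dprod (dprod α β) γ) = dprod α (dprod β γ) := by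
  simp only [dprod_eq_blockInsert, card_Tset_blockInsert]
  exact blockInsert_assoc (Tset_card_le β) α β (Tset_card_le γ) γ

end dprod

theorem dprod_avoids132_and_assoc_general {m n r : ℕ}
    (α : Perm (Fin m)) (β : Perm (Fin n)) (γ : Perm (Fin r)) :
    (Avoids (dprod α β) p132 ↔ Avoids α p132 ∧ Avoids β p132) ∧
    (finCongr (add_assoc m n r)).permCongr (dprod (dprod α β) γ) = dprod α (dprod β γ) :=
  ⟨avoids_p132_dprod_iff α β, dprod_assoc α β γ⟩

/-- The direct product `⊗` is stable and associative on 132-avoiding permutations. -/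
theorem dprod_avoids132_and_assoc {m n r : ℕ}
    (α : Equiv.Perm (Fin m)) (β : Equiv.Perm (Fin n)) (γ : Equiv.Perm (Fin r))
    (hα : Avoids α p132) (hβ : Avoids β p132) (hγ : Avoids γ p132) :
    Avoids (dprod α β) p132 ∧
    (finCongr (add_assoc m n r)).permCongr (dprod (dprod α β) γ) = dprod α (dprod β γ) := by
  obtain ⟨hiff, hassoc⟩ := dprod_avoids132_and_assoc_general α β γ
  exact ⟨hiff.2 ⟨hα, hβ⟩, hassoc⟩
end

section
/- The number of crossings is additive with respect to the direct product on 132-avoiding permutations: for all 132-avoiding permutations α and β, crs(α⊗β) = crs(α) + crs(β). -/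
open Equiv Finset

/-!
Two arcs `i ↦ σ i` and `j ↦ σ j` can cross only if each has an endpoint weakly between the
endpoints of the other. In `α ⊗ β` the arcs of `α` live on a block of consecutive points, and those
of `β` on its complement, so no arc of `α` crosses an arc of `β`. Both pieces are embedded in order,
so their own crossings are kept.
-/

section Crossings

variable {ι κ ν : Type*}

/-- The arcs `i ↦ σ i` and `j ↦ σ j` cross, with `i` the smaller starting point: the condition
counted by `crs`, for a self-map of any preorder. -/
def IsCrossing [Preorder ι] (σ : ι → ι) (i j : ι) : Prop :=
  (i < j ∧ j < σ i ∧ σ i < σ j) ∨ (σ i < σ j ∧ σ j ≤ i ∧ i < j)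

/-- The set of crossings of a self-map of a preorder; its cardinality extends `crs` from
permutations of `Fin n`. -/
def crossings [Preorder ι] (σ : ι → ι) : Set (ι × ι) :=
  {q | IsCrossing σ q.1 q.2}

lemma isCrossing_apply_apply_iff [LinearOrder ι] [Preorder ν] {f : ι → ν} (hf : StrictMono f)
    {σ : ι → ι} {τ : ν → ν} (hστ : Function.Semiconj f σ τ) {i j : ι} :
    IsCrossing τ (f i) (f j) ↔ IsCrossing σ i j := by
  simp only [IsCrossing, ← hστ.eq, hf.lt_iff_lt, hf.le_iff_le]

lemma IsCrossing.mem_iff_mem [Preorder ι] {σ : ι → ι} {s : Set ι} (hs : s.OrdConnected)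
    (hσ : ∀ i, σ i ∈ s ↔ i ∈ s) {i j : ι} (h : IsCrossing σ i j) : i ∈ s ↔ j ∈ s := by
  obtain ⟨hij, hji, hlt⟩ | ⟨hlt, hji, hij⟩ := h
  · constructor <;> intro hmem
    · exact hs.out hmem ((hσ i).2 hmem) ⟨hij.le, hji.le⟩
    · exact (hσ i).1 (hs.out hmem ((hσ j).2 hmem) ⟨hji.le, hlt.le⟩)
  · constructor <;> intro hmem
    · exact (hσ j).1 (hs.out ((hσ i).2 hmem) hmem ⟨hlt.le, hji⟩)
    · exact hs.out ((hσ j).2 hmem) hmem ⟨hji, hij.le⟩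

variable [LinearOrder ι] [LinearOrder κ] [Preorder ν] {e : ι ⊕ κ ≃ ν}

lemma crossings_permCongr_sumCongr (hl : StrictMono (e ∘ Sum.inl)) (hr : StrictMono (e ∘ Sum.inr))
    (hc : (Set.range (e ∘ Sum.inl)).OrdConnected) (α : Perm ι) (β : Perm κ) :
    crossings (e.permCongr (sumCongr α β)) =
      Prod.map (e ∘ Sum.inl) (e ∘ Sum.inl) '' crossings α ∪
        Prod.map (e ∘ Sum.inr) (e ∘ Sum.inr) '' crossings β := by
  have hα : Function.Semiconj (e ∘ Sum.inl) α (e.permCongr (sumCongr α β)) := fun i => by simp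
  have hβ : Function.Semiconj (e ∘ Sum.inr) β (e.permCongr (sumCongr α β)) := fun i => by simp
  have hinv : ∀ x, e.permCongr (sumCongr α β) x ∈ Set.range (e ∘ Sum.inl) ↔
      x ∈ Set.range (e ∘ Sum.inl) := by
    refine e.forall_congr_right.1 ?_
    rintro (i | i) <;> simp
  apply Set.Subset.antisymm
  · rintro ⟨x, y⟩ (hxy : IsCrossing _ x y)
    have hmem := hxy.mem_iff_mem hc hinv
    obtain ⟨x | x, rfl⟩ := e.surjective x <;> obtain ⟨y | y, rfl⟩ := e.surjective y
    · exact .inl ⟨(x, y), (isCrossing_apply_apply_iff hl hα).1 hxy, rfl⟩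
    · simp at hmem
    · simp at hmem
    · exact .inr ⟨(x, y), (isCrossing_apply_apply_iff hr hβ).1 hxy, rfl⟩
  · rintro _ (⟨⟨i, j⟩, hij, rfl⟩ | ⟨⟨i, j⟩, hij, rfl⟩)
    · exact (isCrossing_apply_apply_iff hl hα).2 hij
    · exact (isCrossing_apply_apply_iff hr hβ).2 hij

lemma ncard_crossings_permCongr_sumCongr [Finite ν] (hl : StrictMono (e ∘ Sum.inl))
    (hr : StrictMono (e ∘ Sum.inr)) (hc : (Set.range (e ∘ Sum.inl)).OrdConnected)
    (α : Perm ι) (β : Perm κ) :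
    (crossings (e.permCongr (sumCongr α β))).ncard =
      (crossings α).ncard + (crossings β).ncard := by
  have hdisj : Disjoint (Prod.map (e ∘ Sum.inl) (e ∘ Sum.inl) '' crossings α)
      (Prod.map (e ∘ Sum.inr) (e ∘ Sum.inr) '' crossings β) := by
    rw [Set.disjoint_left]
    rintro _ ⟨p, -, rfl⟩ ⟨q, -, hpq⟩
    simpa using congrArg Prod.fst hpq
  rw [crossings_permCongr_sumCongr hl hr hc, Set.ncard_union_eq hdisj,
    Set.ncard_image_of_injective _ (hl.injective.prodMap hl.injective),
    Set.ncard_image_of_injective _ (hr.injective.prodMap hr.injective)]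

lemma crs_eq_ncard_crossings {n : ℕ} (σ : Perm (Fin n)) : crs σ = (crossings σ).ncard := by
  rw [crs, ← Set.ncard_coe_finset, Finset.coe_filter_univ]
  rfl

end Crossings

section BlockEquiv

variable {m n k : ℕ} (hk : k ≤ n)

lemma coe_blockEquiv_inl (j : Fin m) : (blockEquiv m n k hk (Sum.inl j) : ℕ) = k + j := rfl

lemma coe_blockEquiv_inr (i : Fin n) :
    (blockEquiv m n k hk (Sum.inr i) : ℕ) = if (i : ℕ) < k then (i : ℕ) else m + i := by
  simp only [blockEquiv, ofBijective_apply, Sum.elim_inr]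
  split_ifs <;> rfl

lemma strictMono_blockEquiv_inl : StrictMono (blockEquiv m n k hk ∘ Sum.inl) := fun i j hij => by
  simp only [Function.comp_apply, Fin.lt_def, coe_blockEquiv_inl]
  omega

lemma strictMono_blockEquiv_inr : StrictMono (blockEquiv m n k hk ∘ Sum.inr) := fun i j hij => by
  simp only [Function.comp_apply, Fin.lt_def, coe_blockEquiv_inr]
  split_ifs <;> omega

lemma ordConnected_range_blockEquiv_inl :
    (Set.range (blockEquiv m n k hk ∘ Sum.inl)).OrdConnected := by
  refine ⟨?_⟩
  rintro _ ⟨i, rfl⟩ _ ⟨j, rfl⟩ x ⟨hix, hxj⟩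
  simp only [Function.comp_apply, Fin.le_def, coe_blockEquiv_inl] at hix hxj
  refine ⟨⟨x - k, by omega⟩, Fin.ext ?_⟩
  simp only [Function.comp_apply, coe_blockEquiv_inl]
  omega

end BlockEquiv

theorem crs_dprod_general {m n : ℕ} (α : Equiv.Perm (Fin m)) (β : Equiv.Perm (Fin n)) :
    crs (dprod α β) = crs α + crs β := by
  have hk := Tset_card_le β
  rw [dprod, crs_eq_ncard_crossings, crs_eq_ncard_crossings, crs_eq_ncard_crossings]
  exact ncard_crossings_permCongr_sumCongr (strictMono_blockEquiv_inl hk)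
    (strictMono_blockEquiv_inr hk) (ordConnected_range_blockEquiv_inl hk) α β

/-- The number of crossings is additive with respect to the direct product `⊗`
on 132-avoiding permutations. -/
theorem crs_dprod {m n : ℕ} (α : Equiv.Perm (Fin m)) (β : Equiv.Perm (Fin n))
    (hα : Avoids α p132) (hβ : Avoids β p132) :
    crs (dprod α β) = crs α + crs β :=
  crs_dprod_general α β
end
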